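/- (Fermionic realization of the symplectic node of type C_n.) Let 𝒞 be the complex vector space with basis {a, ā, a*, ā*} and symmetric bilinear form ⟨·,·⟩ determined by ⟨a, a*⟩ = ⟨a*, a⟩ = 1, ⟨ā, ā*⟩ = ⟨ā*, ā⟩ = 1, and all other pairings of basis vectors equal to 0 (here a, ā play the roles of ε_n, ε_{n̄} and a*, ā* of ε_n*, ε_{n̄}*). On the fermionic Fock space V of 𝒞, define for p ∈ ℤ the operators X₊(p) = T_{a, ā*}(p), X₋(p) = T_{a*, ā}(p), and h(p) = T_{a, a*}(p) − T_{ā, ā*}(p). Then for all k, m ∈ ℤ: (i) [X₊(k), X₋(m)] = −( h(k+m) + k δ_{k+m,0} · id_V ); (ii) [h(k), X₊(m)] = 2 X₊(k+m) and [h(k), X₋(m)] = −2 X₋(k+m); (iii) [h(k), h(m)] = 2k δ_{k+m,0} · id_V. Thus X₊, X₋, h realize the MRY relations (R1)–(R3) for the long simple root α_n of the toroidal Lie algebra of type C_n (with (α_n|α_n) = 2) with the central element ¢ acting as the identity, i.e. at level one. -/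

import Mathlib

noncomputable section

variable (C : Type*) [AddCommGroup C] [Module ℂ C]

/-- `W = ⊕_{k ∈ ℤ_{≥0}+1/2} 𝒞^{(k)}`: the direct sum of copies of `𝒞`, the
copy indexed by `k : ℕ` standing for the half-integer `k + 1/2`; the element
of the `k`-th copy corresponding to `u : 𝒞` is the generator `u(-(k+1/2))`. -/
abbrev FockW := ℕ →₀ C

/-- The fermionic Fock space `V = Λ(W)`, the exterior algebra of `W`. -/
abbrev FockV := ExteriorAlgebra ℂ (FockW C)

/-- The creation operator `u(-(k+1/2))`: left exterior multiplication by the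
generator `u(-(k+1/2))`. -/
def create (u : C) (k : ℕ) : FockV C →ₗ[ℂ] FockV C :=
  LinearMap.mulLeft ℂ (ExteriorAlgebra.ι ℂ (Finsupp.single k u))

variable (B : C →ₗ[ℂ] C →ₗ[ℂ] ℂ)

/-- The annihilation operator `u(k+1/2)`: the unique odd derivation of `Λ(W)`
(the left contraction/interior product against the dual vector
`w ↦ ⟨u, w_k⟩`) sending the generator `v(-(l+1/2))` to `⟨u,v⟩ δ_{k,l} · 1`. -/
def annih (u : C) (k : ℕ) : FockV C →ₗ[ℂ] FockV C :=
  CliffordAlgebra.contractLeft ((B u).comp (Finsupp.lapply k))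

/-- The mode `u(m/2)` for an odd integer `m` (so that the half-integers
`m/2 ∈ ℤ + 1/2` are parametrized by odd `m : ℤ`): a creation operator if
`m/2 < 0`, an annihilation operator if `m/2 > 0`. -/
def fop (u : C) (m : ℤ) : FockV C →ₗ[ℂ] FockV C :=
  if m < 0 then create C u ((-m - 1) / 2).toNat else annih C B u ((m - 1) / 2).toNat

/-- The normal ordered product `:u(m/2) v(n/2):` for odd integers `m`, `n`:
it is `u(m/2)v(n/2)` if `m/2 < 0` and `−v(n/2)u(m/2)` if `m/2 > 0`. -/
def nord (u : C) (m : ℤ) (v : C) (n : ℤ) : FockV C →ₗ[ℂ] FockV C :=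
  if m < 0 then (fop C B u m).comp (fop C B v n)
  else -((fop C B v n).comp (fop C B u m))

/-- The normal-ordered quadratic operator
`T_{r₁,r₂}(p) = Σ_{k ∈ ℤ+1/2} :r₁(k) r₂(p−k):` applied to `x ∈ V`, the sum
running over the half-integers `k = j/2` with `j : ℤ` odd (on each vector of
`V` all but finitely many summands act as zero). -/
def Tq (r₁ r₂ : C) (p : ℤ) (x : FockV C) : FockV C :=
  ∑ᶠ (j : ℤ) (_ : Odd j), nord C B r₁ j r₂ (2 * p - j) x

end

noncomputable section

/-- `𝒞`: the complex vector space with basis `{a, ā, a*, ā*}` (coordinates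
`0 ↦ a`, `1 ↦ ā`, `2 ↦ a*`, `3 ↦ ā*`). -/
abbrev CC : Type := Fin 4 → ℂ

/-- `a` (playing the role of `ε_n`) -/
def va : CC := ![1, 0, 0, 0]
/-- `ā` (playing the role of `ε_{n̄}`) -/
def vabar : CC := ![0, 1, 0, 0]
/-- `a*` (playing the role of `ε_n*`) -/
def vastar : CC := ![0, 0, 1, 0]
/-- `ā*` (playing the role of `ε_{n̄}*`) -/
def vabarstar : CC := ![0, 0, 0, 1]

/-- The symmetric bilinear form on `𝒞` with `⟨a,a*⟩ = ⟨a*,a⟩ = 1`,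
`⟨ā,ā*⟩ = ⟨ā*,ā⟩ = 1`, and all other pairings of basis vectors zero. -/
def BC : CC →ₗ[ℂ] CC →ₗ[ℂ] ℂ :=
  LinearMap.mk₂ ℂ (fun v w => v 0 * w 2 + v 2 * w 0 + v 1 * w 3 + v 3 * w 1)
    (fun v v' w => by simp only [Pi.add_apply]; ring)
    (fun c v w => by simp only [Pi.smul_apply, smul_eq_mul]; ring)
    (fun v w w' => by simp only [Pi.add_apply]; ring)
    (fun c v w => by simp only [Pi.smul_apply, smul_eq_mul]; ring)

/-- `X₊(p) = T_{a,ā*}(p)` -/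
def Xplus (p : ℤ) (x : FockV CC) : FockV CC := Tq CC BC va vabarstar p x

/-- `X₋(p) = T_{a*,ā}(p)` -/
def Xminus (p : ℤ) (x : FockV CC) : FockV CC := Tq CC BC vastar vabar p x

/-- `h(p) = T_{a,a*}(p) − T_{ā,ā*}(p)` -/
def hOp (p : ℤ) (x : FockV CC) : FockV CC :=
  Tq CC BC va vastar p x - Tq CC BC vabar vabarstar p x

end

/-!
The commutator of `T_{r₁,r₂}(p)` with a single mode `w(n)` is the combination
`⟨r₂,w⟩ r₁(n+p) - ⟨r₁,w⟩ r₂(n+p)` of modes. By the Leibniz rule, commuting with `T_{s₁,s₂}(q)`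
therefore gives four quadratic operators, but in the two where the first factor was shifted by `p`
the cutoff between creation and annihilation has moved from `0` to `p`. Each unit move of the
cutoff reorders a single product, at the cost of the scalar `⟨u,v⟩ δ_{p+q,0}`; moving it back
by `p` produces the central term. For hyperbolic pairs `(ε_i, ε_i*)` the `E_ij(p) = T_{ε_i,ε_j*}(p)`
thus satisfy the relations of affine `gl` at level one, and `X₊ = E_12`, `X₋ = -E_21`,
`h = E_11 - E_22`.
-/

open Filter

section PointwiseSum

variable {R M ι κ : Type*} [CommRing R] [AddCommGroup M] [Module R M]

/-- The family of endomorphisms `F` is locally finite (each vector is killed by all but finitely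
many members) with pointwise sum `S`; the sense in which the mode expansions of fields
converge. -/
def HasPointwiseSum (F : ι → Module.End R M) (S : Module.End R M) : Prop :=
  ∀ x, (fun i ↦ F i x).HasFiniteSupport ∧ ∑ᶠ i, F i x = S x

/-- The sum of a locally finite family of endomorphisms. -/
noncomputable def pointwiseSum (F : ι → Module.End R M)
    (hF : ∀ x, (fun i ↦ F i x).HasFiniteSupport) : Module.End R M where
  toFun x := ∑ᶠ i, F i x
  map_add' x y := by simp only [map_add, finsum_add_distrib (hF x) (hF y)]
  map_smul' r x := by simp only [map_smul, RingHom.id_apply, smul_finsum' r (hF x)]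

theorem hasPointwiseSum_pointwiseSum (F : ι → Module.End R M)
    (hF : ∀ x, (fun i ↦ F i x).HasFiniteSupport) : HasPointwiseSum F (pointwiseSum F hF) :=
  fun x ↦ ⟨hF x, rfl⟩

theorem hasPointwiseSum_ite_eq [DecidableEq ι] (a : ι) (A : Module.End R M) :
    HasPointwiseSum (fun i ↦ if i = a then A else 0) A := by
  refine fun x ↦ ⟨(Set.finite_singleton a).subset fun i hi ↦ ?_, ?_⟩
  · by_contra hia
    exact hi (by simp [show i ≠ a from hia])
  · exact (finsum_eq_single _ a fun i hia ↦ by simp [hia]).trans (by simp)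

namespace HasPointwiseSum

variable {F G : ι → Module.End R M} {S T : Module.End R M}

theorem unique (hS : HasPointwiseSum F S) (hT : HasPointwiseSum F T) : S = T :=
  LinearMap.ext fun x ↦ (hS x).2.symm.trans (hT x).2

theorem add (hF : HasPointwiseSum F S) (hG : HasPointwiseSum G T) :
    HasPointwiseSum (fun i ↦ F i + G i) (S + T) := fun x ↦
  ⟨(hF x).1.add (hG x).1,
    (finsum_add_distrib (hF x).1 (hG x).1).trans (congrArg₂ _ (hF x).2 (hG x).2)⟩

theorem mul_left (A : Module.End R M) (hF : HasPointwiseSum F S) :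
    HasPointwiseSum (fun i ↦ A * F i) (A * S) := fun x ↦
  ⟨(hF x).1.fun_comp (map_zero A),
    (A.toAddMonoidHom.map_finsum (hF x).1).symm.trans (congrArg A (hF x).2)⟩

theorem mul_right (A : Module.End R M) (hF : HasPointwiseSum F S) :
    HasPointwiseSum (fun i ↦ F i * A) (S * A) :=
  fun x ↦ hF (A x)

theorem smul (r : R) (hF : HasPointwiseSum F S) : HasPointwiseSum (fun i ↦ r • F i) (r • S) := by
  simpa only [smul_mul_assoc, one_mul] using hF.mul_left (r • 1)

theorem neg (hF : HasPointwiseSum F S) : HasPointwiseSum (fun i ↦ -F i) (-S) := by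
  simpa only [neg_smul, one_smul] using hF.smul (-1)

theorem sub (hF : HasPointwiseSum F S) (hG : HasPointwiseSum G T) :
    HasPointwiseSum (fun i ↦ F i - G i) (S - T) := by
  simpa only [sub_eq_add_neg] using hF.add hG.neg

theorem lie_left (A : Module.End R M) (hF : HasPointwiseSum F S) :
    HasPointwiseSum (fun i ↦ ⁅A, F i⁆) ⁅A, S⁆ :=
  (hF.mul_left A).sub (hF.mul_right A)

theorem lie_right (A : Module.End R M) (hF : HasPointwiseSum F S) :
    HasPointwiseSum (fun i ↦ ⁅F i, A⁆) ⁅S, A⁆ :=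
  (hF.mul_right A).sub (hF.mul_left A)

theorem comp_equiv (e : κ ≃ ι) (hF : HasPointwiseSum F S) :
    HasPointwiseSum (fun k ↦ F (e k)) S := fun x ↦
  ⟨(hF x).1.fun_comp_of_injective e.injective, (finsum_comp_equiv e).trans (hF x).2⟩

end HasPointwiseSum

end PointwiseSum

section FermionicRep

attribute [local instance] LieRing.ofAssociativeRing

variable {R V C : Type*} [CommRing R] [AddCommGroup V] [Module R V]
  {B : C → C → R} {ψ : C → ℤ → Module.End R V}

/-- The operators `ψ u i`, standing for the modes `u(i + 1/2)`, satisfy the canonical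
anticommutation relations of the pairing `B`, and every vector is killed by all `ψ u i` with `i`
large: `V` is a smooth module over the Clifford algebra of modes, of which Fock space is the
main example. -/
structure IsFermionicRep (B : C → C → R) (ψ : C → ℤ → Module.End R V) : Prop where
  mul_add_swap (u v : C) (i j : ℤ) :
    ψ u i * ψ v j + ψ v j * ψ u i = (if i + j + 1 = 0 then B u v else 0) • 1
  eventually_eq_zero (u : C) (x : V) : ∀ᶠ i in atTop, ψ u i x = 0

variable (ψ) in
/-- The product `:u(i + 1/2) v(j + 1/2):` normally ordered with respect to the cutoff `c`, modes
`u(i + 1/2)` with `i < c` counting as creation operators. The usual normal ordering is the case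
`c = 0`. -/
def normalOrder (c : ℤ) (u : C) (i : ℤ) (v : C) (j : ℤ) : Module.End R V :=
  if i < c then ψ u i * ψ v j else -(ψ v j * ψ u i)

namespace IsFermionicRep

theorem normalOrder_eq_mul_sub (hψ : IsFermionicRep B ψ) (c : ℤ) (u v : C) (i j : ℤ) :
    normalOrder ψ c u i v j =
      ψ u i * ψ v j - (if i < c then 0 else if i + j + 1 = 0 then B u v else 0) • 1 := by
  unfold normalOrder
  split_ifs with hic hij
  · rw [zero_smul, sub_zero]
  all_goals
    have anticomm := hψ.mul_add_swap u v i j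
    simp only [hij, if_true, if_false] at anticomm
    rw [← anticomm]
    abel

theorem normalOrder_zero_swap (hψ : IsFermionicRep B ψ) (u v : C) (i j : ℤ) :
    normalOrder ψ 0 v j u i = -normalOrder ψ 0 u i v j := by
  have anticomm (hij : i + j + 1 ≠ 0) : ψ u i * ψ v j = -(ψ v j * ψ u i) :=
    eq_neg_of_add_eq_zero_left <| by rw [hψ.mul_add_swap, if_neg hij, zero_smul]
  unfold normalOrder
  split_ifs with hj hi hi
  · rw [anticomm (by omega), neg_neg]
  · rw [neg_neg]
  · rfl
  · rw [anticomm (by omega), neg_neg]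

theorem lie_normalOrder_mode (hψ : IsFermionicRep B ψ) (c : ℤ) (u v w : C) (i j n : ℤ) :
    ⁅normalOrder ψ c u i v j, ψ w n⁆ =
      (if j + n + 1 = 0 then B v w else 0) • ψ u i -
        (if i + n + 1 = 0 then B u w else 0) • ψ v j := by
  calc ⁅normalOrder ψ c u i v j, ψ w n⁆
      = ⁅ψ u i * ψ v j, ψ w n⁆ := by
        rw [hψ.normalOrder_eq_mul_sub, sub_lie, smul_lie]
        simp [Ring.lie_def]
    _ = ψ u i * (ψ v j * ψ w n + ψ w n * ψ v j) -
          (ψ u i * ψ w n + ψ w n * ψ u i) * ψ v j := by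
        rw [Ring.lie_def]
        noncomm_ring
    _ = _ := by
        rw [hψ.mul_add_swap, hψ.mul_add_swap, mul_smul_comm, mul_one, smul_mul_assoc, one_mul]

theorem hasFiniteSupport_normalOrder (hψ : IsFermionicRep B ψ) (c : ℤ) (u v : C) (p : ℤ)
    (x : V) : (fun i ↦ normalOrder ψ c u i v (p - 1 - i) x).HasFiniteSupport := by
  obtain ⟨N, hN⟩ := eventually_atTop.1 (hψ.eventually_eq_zero u x)
  obtain ⟨M, hM⟩ := eventually_atTop.1 (hψ.eventually_eq_zero v x)
  refine (Set.finite_Icc (min (p - 1 - M) c) (max N c)).subset fun i hi ↦ ?_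
  contrapose! hi
  rw [Set.mem_Icc, not_and_or] at hi
  rw [Function.notMem_support, normalOrder]
  rcases hi with hi | hi
  · simp [show i < c by omega, hM (p - 1 - i) (by omega)]
  · simp [show ¬i < c by omega, hN i (by omega)]

/-- The quadratic operator `T_{u,v}(p)` normally ordered with respect to the cutoff `c`. A
commutator of two quadratic operators is naturally a combination of these with a moved cutoff. -/
noncomputable def cutoffQuadraticOp (hψ : IsFermionicRep B ψ) (c : ℤ) (u v : C) (p : ℤ) :
    Module.End R V :=
  pointwiseSum (fun i ↦ normalOrder ψ c u i v (p - 1 - i))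
    (hψ.hasFiniteSupport_normalOrder c u v p)

theorem hasPointwiseSum_normalOrder (hψ : IsFermionicRep B ψ) (c : ℤ) (u v : C) (p : ℤ) :
    HasPointwiseSum (fun i ↦ normalOrder ψ c u i v (p - 1 - i))
      (hψ.cutoffQuadraticOp c u v p) :=
  hasPointwiseSum_pointwiseSum _ _

/-- The normally ordered quadratic operator `T_{u,v}(p)`. -/
noncomputable def quadraticOp (hψ : IsFermionicRep B ψ) (u v : C) (p : ℤ) : Module.End R V :=
  hψ.cutoffQuadraticOp 0 u v p

theorem quadraticOp_swap (hψ : IsFermionicRep B ψ) (u v : C) (p : ℤ) :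
    hψ.quadraticOp v u p = -hψ.quadraticOp u v p := by
  refine ((hψ.hasPointwiseSum_normalOrder 0 v u p).comp_equiv (Equiv.subLeft (p - 1))).unique ?_
  convert (hψ.hasPointwiseSum_normalOrder 0 u v p).neg using 2 with i
  · rw [Equiv.subLeft_apply, sub_sub_cancel, hψ.normalOrder_zero_swap]
  · rfl

theorem cutoffQuadraticOp_add_one (hψ : IsFermionicRep B ψ) (c : ℤ) (u v : C) (p : ℤ) :
    hψ.cutoffQuadraticOp (c + 1) u v p =
      hψ.cutoffQuadraticOp c u v p + (if p = 0 then B u v else 0) • 1 := by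
  refine (hψ.hasPointwiseSum_normalOrder (c + 1) u v p).unique ?_
  convert (hψ.hasPointwiseSum_normalOrder c u v p).add
    (hasPointwiseSum_ite_eq c ((if p = 0 then B u v else 0) • 1)) using 2 with i
  simp only [hψ.normalOrder_eq_mul_sub, show i + (p - 1 - i) + 1 = p by ring]
  rcases lt_trichotomy i c with hic | rfl | hci
  · simp [hic, hic.ne, hic.trans (lt_add_one c)]
  · simp
  · simp [hci.ne', hci.not_gt, show ¬i < c + 1 by omega]

theorem cutoffQuadraticOp_eq_add (hψ : IsFermionicRep B ψ) (c : ℤ) (u v : C) (p : ℤ) :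
    hψ.cutoffQuadraticOp c u v p =
      hψ.quadraticOp u v p + (c * if p = 0 then B u v else 0 : R) • 1 := by
  induction c with
  | zero => simp [quadraticOp]
  | succ n ih =>
    rw [hψ.cutoffQuadraticOp_add_one, ih]
    push_cast
    module
  | pred n ih =>
    have step := hψ.cutoffQuadraticOp_add_one (-n - 1) u v p
    rw [sub_add_cancel, ih] at step
    rw [eq_sub_of_add_eq step.symm]
    push_cast
    module

theorem lie_cutoffQuadraticOp_mode (hψ : IsFermionicRep B ψ) (c : ℤ) (u v w : C) (p n : ℤ) :
    ⁅hψ.cutoffQuadraticOp c u v p, ψ w n⁆ =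
      B v w • ψ u (n + p) - B u w • ψ v (n + p) := by
  refine ((hψ.hasPointwiseSum_normalOrder c u v p).lie_right (ψ w n)).unique ?_
  convert (hasPointwiseSum_ite_eq (n + p) (B v w • ψ u (n + p))).sub
    (hasPointwiseSum_ite_eq (-1 - n) (B u w • ψ v (n + p))) using 2 with i
  rw [hψ.lie_normalOrder_mode]
  congr 1
  · obtain rfl | hi := eq_or_ne i (n + p)
    · rw [if_pos (by ring), if_pos rfl]
    · rw [if_neg (by omega), if_neg hi, zero_smul]
  · obtain rfl | hi := eq_or_ne i (-1 - n)
    · rw [if_pos (by ring), if_pos rfl, show p - 1 - (-1 - n) = n + p by ring]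
    · rw [if_neg (by omega), if_neg hi, zero_smul]

theorem lie_cutoffQuadraticOp_normalOrder (hψ : IsFermionicRep B ψ) (c d : ℤ) (r₁ r₂ s₁ s₂ : C)
    (p i j : ℤ) :
    ⁅hψ.cutoffQuadraticOp c r₁ r₂ p, normalOrder ψ d s₁ i s₂ j⁆ =
      B r₂ s₁ • normalOrder ψ (d + p) r₁ (i + p) s₂ j -
        B r₁ s₁ • normalOrder ψ (d + p) r₂ (i + p) s₂ j +
        B r₂ s₂ • normalOrder ψ d s₁ i r₁ (j + p) -
        B r₁ s₂ • normalOrder ψ d s₁ i r₂ (j + p) := by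
  have leibniz (X Y Z : Module.End R V) : ⁅X, Y * Z⁆ = ⁅X, Y⁆ * Z + Y * ⁅X, Z⁆ := by
    simp only [Ring.lie_def]
    noncomm_ring
  simp only [normalOrder, add_lt_add_iff_right]
  split_ifs <;>
  · simp only [lie_neg, leibniz, hψ.lie_cutoffQuadraticOp_mode, sub_mul, mul_sub, smul_mul_assoc,
      mul_smul_comm]
    module

theorem lie_cutoffQuadraticOp (hψ : IsFermionicRep B ψ) (c d : ℤ) (r₁ r₂ s₁ s₂ : C) (p q : ℤ) :
    ⁅hψ.cutoffQuadraticOp c r₁ r₂ p, hψ.cutoffQuadraticOp d s₁ s₂ q⁆ =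
      B r₂ s₁ • hψ.cutoffQuadraticOp (d + p) r₁ s₂ (p + q) -
        B r₁ s₁ • hψ.cutoffQuadraticOp (d + p) r₂ s₂ (p + q) +
        B r₂ s₂ • hψ.cutoffQuadraticOp d s₁ r₁ (p + q) -
        B r₁ s₂ • hψ.cutoffQuadraticOp d s₁ r₂ (p + q) := by
  have shifted (u : C) :=
    (hψ.hasPointwiseSum_normalOrder (d + p) u s₂ (p + q)).comp_equiv (Equiv.addRight p)
  have unshifted (u : C) := hψ.hasPointwiseSum_normalOrder d s₁ u (p + q)
  refine ((hψ.hasPointwiseSum_normalOrder d s₁ s₂ q).lie_left _).unique ?_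
  convert ((((shifted r₁).smul (B r₂ s₁)).sub ((shifted r₂).smul (B r₁ s₁))).add
    ((unshifted r₁).smul (B r₂ s₂))).sub ((unshifted r₂).smul (B r₁ s₂)) using 2 with i
  rw [hψ.lie_cutoffQuadraticOp_normalOrder, Equiv.coe_addRight,
    show p + q - 1 - (i + p) = q - 1 - i by ring, show p + q - 1 - i = q - 1 - i + p by ring]

theorem lie_quadraticOp (hψ : IsFermionicRep B ψ) (r₁ r₂ s₁ s₂ : C) (p q : ℤ) :
    ⁅hψ.quadraticOp r₁ r₂ p, hψ.quadraticOp s₁ s₂ q⁆ =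
      B r₂ s₁ • hψ.quadraticOp r₁ s₂ (p + q) - B r₁ s₁ • hψ.quadraticOp r₂ s₂ (p + q) +
        B r₂ s₂ • hψ.quadraticOp s₁ r₁ (p + q) - B r₁ s₂ • hψ.quadraticOp s₁ r₂ (p + q) +
        (if p + q = 0 then p * (B r₂ s₁ * B r₁ s₂ - B r₁ s₁ * B r₂ s₂) else 0 : R) • 1 := by
  refine (hψ.lie_cutoffQuadraticOp 0 0 r₁ r₂ s₁ s₂ p q).trans ?_
  rw [zero_add, hψ.cutoffQuadraticOp_eq_add p, hψ.cutoffQuadraticOp_eq_add p]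
  unfold quadraticOp
  split_ifs <;> module

end IsFermionicRep

end FermionicRep

section AffineGL

attribute [local instance] LieRing.ofAssociativeRing

variable {R V C ι : Type*} [CommRing R] [AddCommGroup V] [Module R V] [DecidableEq ι]
  {B : C → C → R} {ψ : C → ℤ → Module.End R V} {e f : ι → C}

/-- The vectors `ε_i = e i` and `ε_i* = f i` form hyperbolic pairs for `B`, mutually orthogonal
for distinct indices. -/
structure IsHyperbolicFamily (B : C → C → R) (e f : ι → C) : Prop where
  isotropic_left (i j : ι) : B (e i) (e j) = 0
  isotropic_right (i j : ι) : B (f i) (f j) = 0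
  left_right (i j : ι) : B (e i) (f j) = if i = j then 1 else 0
  right_left (i j : ι) : B (f i) (e j) = if i = j then 1 else 0

namespace IsFermionicRep

theorem lie_quadraticOp_of_isHyperbolicFamily (hψ : IsFermionicRep B ψ)
    (hef : IsHyperbolicFamily B e f) (i j k l : ι) (p q : ℤ) :
    ⁅hψ.quadraticOp (e i) (f j) p, hψ.quadraticOp (e k) (f l) q⁆ =
      (if j = k then hψ.quadraticOp (e i) (f l) (p + q) else 0) -
        (if i = l then hψ.quadraticOp (e k) (f j) (p + q) else 0) +
        (if p + q = 0 ∧ j = k ∧ i = l then (p : R) else 0) • 1 := by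
  rw [hψ.lie_quadraticOp, hef.isotropic_left, hef.isotropic_right, hef.left_right,
    hef.right_left]
  split_ifs <;> simp_all

/-- The Cartan operator `h(p) = T_{ε_i,ε_i*}(p) - T_{ε_j,ε_j*}(p)`, the mode of the coroot
`E_ii - E_jj`. -/
noncomputable def cartanOp (hψ : IsFermionicRep B ψ) (e f : ι → C) (i j : ι) (p : ℤ) :
    Module.End R V :=
  hψ.quadraticOp (e i) (f i) p - hψ.quadraticOp (e j) (f j) p

end IsFermionicRep

theorem symplectic_node_realization_general (hψ : IsFermionicRep B ψ)
    (hef : IsHyperbolicFamily B e f) {i j : ι} (hij : i ≠ j) (k m : ℤ) :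
    ⁅hψ.quadraticOp (e i) (f j) k, hψ.quadraticOp (f i) (e j) m⁆ =
      -(hψ.cartanOp e f i j (k + m) + (if k + m = 0 then (k : R) else 0) • 1) ∧
    ⁅hψ.cartanOp e f i j k, hψ.quadraticOp (e i) (f j) m⁆ =
      (2 : R) • hψ.quadraticOp (e i) (f j) (k + m) ∧
    ⁅hψ.cartanOp e f i j k, hψ.quadraticOp (f i) (e j) m⁆ =
      -((2 : R) • hψ.quadraticOp (f i) (e j) (k + m)) ∧
    ⁅hψ.cartanOp e f i j k, hψ.cartanOp e f i j m⁆ =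
      (if k + m = 0 then 2 * (k : R) else 0) • 1 := by
  refine ⟨?_, ?_, ?_, ?_⟩ <;>
    simp only [IsFermionicRep.cartanOp, hψ.quadraticOp_swap (e j) (f i), lie_neg, lie_sub,
      sub_lie, hψ.lie_quadraticOp_of_isHyperbolicFamily hef, hij, hij.symm, if_true, if_false,
      and_true, and_false]
  · module
  · module
  · split_ifs <;> module

end AffineGL

section FockModes

variable {C : Type*} [AddCommGroup C] [Module ℂ C] {B : C →ₗ[ℂ] C →ₗ[ℂ] ℂ}

variable (B) in
/-- The mode `u(i + 1/2)` on Fock space, so that all half-integers are indexed by `i : ℤ`. -/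
noncomputable def mode (u : C) (i : ℤ) : Module.End ℂ (FockV C) := fop C B u (2 * i + 1)

theorem mode_natCast (u : C) (k : ℕ) : mode B u k = annih C B u k := by
  have hk : (2 * (k : ℤ) + 1 - 1) / 2 = k := by omega
  rw [mode, fop, if_neg (by omega), hk, Int.toNat_natCast]

theorem mode_negSucc (u : C) (k : ℕ) : mode B u (Int.negSucc k) = create C u k := by
  have hk : (-(2 * Int.negSucc k + 1) - 1) / 2 = k := by omega
  rw [mode, fop, if_pos (by omega), hk, Int.toNat_natCast]

theorem annih_ι_mul (u : C) (k : ℕ) (w : FockW C) (x : FockV C) :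
    annih C B u k (ExteriorAlgebra.ι ℂ w * x) =
      B u (w k) • x - ExteriorAlgebra.ι ℂ w * annih C B u k x :=
  CliffordAlgebra.contractLeft_ι_mul _ _ _

theorem create_mul_create_add_swap (u v : C) (k l : ℕ) :
    create C u k * create C v l + create C v l * create C u k = 0 := by
  ext x
  simp [create, ← mul_assoc, ← add_mul, ExteriorAlgebra.ι_add_mul_swap]

theorem annih_mul_annih_add_swap (u v : C) (k l : ℕ) :
    annih C B u k * annih C B v l + annih C B v l * annih C B u k = 0 :=
  LinearMap.ext fun x ↦ add_eq_zero_iff_eq_neg.2 (CliffordAlgebra.contractLeft_comm _ _ x)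

theorem annih_mul_create_add_swap (u v : C) (k l : ℕ) :
    annih C B u k * create C v l + create C v l * annih C B u k =
      (if k = l then B u v else 0) • 1 := by
  ext x
  obtain rfl | hkl := eq_or_ne k l
  · simp [create, annih_ι_mul]
  · simp [create, annih_ι_mul, hkl]

theorem mode_mul_mode_add_swap (hB : B.IsSymm) (u v : C) (i j : ℤ) :
    mode B u i * mode B v j + mode B v j * mode B u i =
      (if i + j + 1 = 0 then B u v else 0) • 1 := by
  rcases i with k | k <;> rcases j with l | l <;>
    simp only [Int.ofNat_eq_natCast, mode_natCast, mode_negSucc]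
  · rw [annih_mul_annih_add_swap, if_neg (by omega), zero_smul]
  · rw [annih_mul_create_add_swap]
    congr 2
    exact propext (by omega)
  · rw [add_comm, annih_mul_create_add_swap, ← hB.eq u v, RingHom.id_apply]
    congr 2
    exact propext (by omega)
  · rw [create_mul_create_add_swap, if_neg (by omega), zero_smul]

theorem eventually_annih_eq_zero (u : C) (x : FockV C) : ∀ᶠ k in atTop, annih C B u k x = 0 := by
  induction x using CliffordAlgebra.left_induction with
  | algebraMap r => exact .of_forall fun k ↦ CliffordAlgebra.contractLeft_algebraMap _ _ r
  | add x y hx hy =>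
    filter_upwards [hx, hy] with k hkx hky
    rw [map_add, hkx, hky, add_zero]
  | ι_mul x w hx =>
    have hw : ∀ᶠ k in atTop, w k = 0 := by
      rw [← Nat.cofinite_eq_atTop]
      exact w.hasFiniteSupport
    filter_upwards [hx, hw] with k hkx hkw
    refine (annih_ι_mul u k w x).trans ?_
    rw [hkx, hkw, map_zero, zero_smul, mul_zero, sub_zero]

theorem eventually_mode_eq_zero (u : C) (x : FockV C) : ∀ᶠ i in atTop, mode B u i x = 0 := by
  rw [← Nat.map_cast_int_atTop, eventually_map]
  simpa only [mode_natCast] using eventually_annih_eq_zero u x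

theorem isFermionicRep_mode (hB : B.IsSymm) : IsFermionicRep (fun u v ↦ B u v) (mode B) :=
  ⟨mode_mul_mode_add_swap hB, eventually_mode_eq_zero⟩

theorem nord_odd (u : C) (i : ℤ) (v : C) (j : ℤ) :
    nord C B u (2 * i + 1) v (2 * j + 1) = normalOrder (mode B) 0 u i v j :=
  if_congr (by omega) rfl rfl

theorem Tq_eq_quadraticOp (hB : B.IsSymm) (u v : C) (p : ℤ) :
    Tq C B u v p = (isFermionicRep_mode hB).quadraticOp u v p := by
  funext x
  have hinj : Function.Injective fun i : ℤ ↦ 2 * i + 1 := fun i j hij ↦ by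
    simpa using hij
  have hodd : {j : ℤ | Odd j} = Set.range fun i : ℤ ↦ 2 * i + 1 :=
    Set.ext fun j ↦ exists_congr fun i ↦ eq_comm
  calc Tq C B u v p x
      = ∑ᶠ j ∈ {j : ℤ | Odd j}, nord C B u j v (2 * p - j) x := rfl
    _ = ∑ᶠ i : ℤ, nord C B u (2 * i + 1) v (2 * p - (2 * i + 1)) x := by
        rw [hodd, finsum_mem_range hinj]
    _ = ∑ᶠ i : ℤ, normalOrder (mode B) 0 u i v (p - 1 - i) x := finsum_congr fun i ↦ by
        rw [← nord_odd, show 2 * p - (2 * i + 1) = 2 * (p - 1 - i) + 1 by ring]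

end FockModes

theorem BC_isSymm : BC.IsSymm :=
  ⟨fun u v ↦ by simp only [BC, LinearMap.mk₂_apply, RingHom.id_apply]; ring⟩

theorem isHyperbolicFamily_BC :
    IsHyperbolicFamily (fun u v ↦ BC u v) ![va, vabar] ![vastar, vabarstar] := by
  constructor <;> simp [Fin.forall_fin_two, BC, va, vabar, vastar, vabarstar]

/-- Fermionic realization of the symplectic node of type `C_n`: the operators
`X₊(p) = T_{a,ā*}(p)`, `X₋(p) = T_{a*,ā}(p)`, `h(p) = T_{a,a*}(p) − T_{ā,ā*}(p)`
satisfy, for all `k, m ∈ ℤ`,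
(i) `[X₊(k), X₋(m)] = −(h(k+m) + k δ_{k+m,0} · id_V)`;
(ii) `[h(k), X₊(m)] = 2 X₊(k+m)` and `[h(k), X₋(m)] = −2 X₋(k+m)`;
(iii) `[h(k), h(m)] = 2k δ_{k+m,0} · id_V`;
i.e. the MRY relations (R1)–(R3) for the long simple root `α_n` of the
toroidal Lie algebra of type `C_n` (with `(α_n|α_n) = 2`), with the central
element `¢` acting as the identity (level one). -/
theorem symplectic_node_realization (k m : ℤ) (x : FockV CC) :
    (Xplus k (Xminus m x) - Xminus m (Xplus k x)
        = -(hOp (k + m) x + (if k + m = 0 then (k : ℂ) else 0) • x)) ∧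
    (hOp k (Xplus m x) - Xplus m (hOp k x) = (2 : ℂ) • Xplus (k + m) x) ∧
    (hOp k (Xminus m x) - Xminus m (hOp k x) = -((2 : ℂ) • Xminus (k + m) x)) ∧
    (hOp k (hOp m x) - hOp m (hOp k x)
        = (if k + m = 0 then 2 * (k : ℂ) else 0) • x) := by
  obtain ⟨hXX, hhp, hhm, hhh⟩ := symplectic_node_realization_general
    (isFermionicRep_mode BC_isSymm) isHyperbolicFamily_BC zero_ne_one k m
  simp only [Xplus, Xminus, hOp, Tq_eq_quadraticOp BC_isSymm]
  exact ⟨LinearMap.congr_fun hXX x, LinearMap.congr_fun hhp x, LinearMap.congr_fun hhm x,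
    LinearMap.congr_fun hhh x⟩
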